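/- arXiv:2501.00201 — 3 statements merged into one kernel-verified Lean document; each statement's English description precedes it below -/
import Mathlib

section
/- Let N, U be positive integers, let α > 0, P_tx > 0, σ_sen² > 0 be reals, and set ρ_sen = σ_sen²/(2·α·N·P_tx). Let μ, μ' : {1,…,U} → {0,1} be admission vectors and let τ, τ' be reals with 0 ≤ τ ≤ α·N·P_tx/σ_sen² and 0 ≤ τ' ≤ α·N·P_tx/σ_sen². If Σ_{u=1}^U μ_u > Σ_{u=1}^U μ'_u, then Σ_{u=1}^U μ_u + ρ_sen·τ > Σ_{u=1}^U μ'_u + ρ_sen·τ'. (Thus with weights ρ_com = 1 and ρ_sen = σ_sen²/(2αNP_tx), any gain in the number of admitted users strictly dominates any possible change in the sensing term, i.e., communications has higher hierarchy.) -/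
/-!
Two distinct admission counts are integers, so they differ by at least `1`. The weight `ρ_sen` is
the reciprocal of twice the largest sensing SNR `α·N·P_tx/σ_sen²`, so the weighted sensing term
lies in `[0, 1/2]` and cannot make up for a gap of `1`.
-/

theorem mem_of_eq_zero_or_eq_one {R S : Type*} [Zero R] [One R] [SetLike S R]
    [ZeroMemClass S R] [OneMemClass S R] (s : S) {x : R} (hx : x = 0 ∨ x = 1) : x ∈ s := by
  rcases hx with rfl | rfl
  · exact zero_mem s
  · exact one_mem s

theorem div_mul_mul_div_eq_inv {G : Type*} [CommGroupWithZero G] {a b : G} (c : G)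
    (ha : a ≠ 0) (hb : b ≠ 0) : a / (c * b) * (b / a) = c⁻¹ := by
  rw [div_mul_div_cancel₀' ha, div_mul_cancel_right₀ hb]

theorem mul_lt_one_add_mul {R : Type*} [Semiring R] [PartialOrder R] [IsOrderedRing R]
    {ρ T τ τ' : R} (hρ : 0 ≤ ρ) (hρT : ρ * T < 1) (hτ : 0 ≤ τ) (hτ' : τ' ≤ T) :
    ρ * τ' < 1 + ρ * τ :=
  calc
    ρ * τ' ≤ ρ * T := mul_le_mul_of_nonneg_left hτ' hρ
    _ < 1 := hρT
    _ ≤ 1 + ρ * τ := le_add_of_nonneg_right (mul_nonneg hρ hτ)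

section OrderedRing

variable {R : Type*} [Ring R] [LinearOrder R] [IsStrictOrderedRing R]

theorem add_one_le_of_lt_of_mem_range_intCast {x y : R}
    (hx : x ∈ (Int.castRingHom R).range) (hy : y ∈ (Int.castRingHom R).range) (hxy : x < y) :
    x + 1 ≤ y := by
  obtain ⟨m, rfl⟩ := hx
  obtain ⟨n, rfl⟩ := hy
  simp only [eq_intCast] at hxy ⊢
  exact_mod_cast hxy

theorem hierarchy_strict_dominance_general {ι κ : Type*} {s : Finset ι} {t : Finset κ}
    {μ : ι → R} {μ' : κ → R}
    (hμ : ∀ i ∈ s, μ i ∈ (Int.castRingHom R).range)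
    (hμ' : ∀ k ∈ t, μ' k ∈ (Int.castRingHom R).range)
    {ρ T τ τ' : R} (hρ : 0 ≤ ρ) (hρT : ρ * T < 1) (hτ : 0 ≤ τ) (hτ' : τ' ≤ T)
    (hgt : ∑ i ∈ s, μ i > ∑ k ∈ t, μ' k) :
    ∑ i ∈ s, μ i + ρ * τ > ∑ k ∈ t, μ' k + ρ * τ' :=
  calc
    ∑ k ∈ t, μ' k + ρ * τ' < ∑ k ∈ t, μ' k + (1 + ρ * τ) := by
      gcongr
      exact mul_lt_one_add_mul hρ hρT hτ hτ'
    _ = (∑ k ∈ t, μ' k + 1) + ρ * τ := (add_assoc _ _ _).symm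
    _ ≤ ∑ i ∈ s, μ i + ρ * τ := by
      gcongr
      exact add_one_le_of_lt_of_mem_range_intCast (sum_mem hμ') (sum_mem hμ) hgt

end OrderedRing

/-- Hierarchical prioritization (Lemma 1): with weights ρ_com = 1 and
ρ_sen = σ_sen²/(2·α·N·P_tx), any strict gain in the number of admitted users
strictly dominates any possible change of the sensing term τ ∈ [0, α·N·P_tx/σ_sen²]. -/
theorem hierarchy_strict_dominance
    (N U : ℕ) (hN : 0 < N) (hU : 0 < U)
    (α Ptx σsen2 : ℝ) (hα : 0 < α) (hP : 0 < Ptx) (hσ : 0 < σsen2)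
    (ρsen : ℝ) (hρ : ρsen = σsen2 / (2 * α * N * Ptx))
    (μ μ' : Fin U → ℝ)
    (hμ : ∀ u, μ u = 0 ∨ μ u = 1) (hμ' : ∀ u, μ' u = 0 ∨ μ' u = 1)
    (τ τ' : ℝ)
    (hτ0 : 0 ≤ τ) (hτ1 : τ ≤ α * N * Ptx / σsen2)
    (hτ'0 : 0 ≤ τ') (hτ'1 : τ' ≤ α * N * Ptx / σsen2)
    (hgt : ∑ u, μ u > ∑ u, μ' u) :
    ∑ u, μ u + ρsen * τ > ∑ u, μ' u + ρsen * τ' := by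
  have hbound : 0 < α * N * Ptx := by positivity
  have hhalf : ρsen * (α * N * Ptx / σsen2) = 2⁻¹ := by
    simpa only [hρ, mul_assoc] using div_mul_mul_div_eq_inv 2 hσ.ne' hbound.ne'
  exact hierarchy_strict_dominance_general
    (fun u _ ↦ mem_of_eq_zero_or_eq_one _ (hμ u))
    (fun u _ ↦ mem_of_eq_zero_or_eq_one _ (hμ' u))
    (hρ ▸ by positivity) (hhalf.trans_lt two_inv_lt_one) hτ0 hτ'1 hgt
end

section
/- Let N, U be positive integers, let α > 0, P_tx > 0, σ_sen² > 0 be reals, and set ρ_sen = σ_sen²/(2·α·N·P_tx). Let μ, μ' : {1,…,U} → {0,1} and let τ, τ' be reals with 0 ≤ τ ≤ α·N·P_tx/σ_sen² and 0 ≤ τ' ≤ α·N·P_tx/σ_sen². If Σ_{u=1}^U μ_u + ρ_sen·τ ≥ Σ_{u=1}^U μ'_u + ρ_sen·τ', then Σ_{u=1}^U μ_u ≥ Σ_{u=1}^U μ'_u. (Maximizing the weighted objective never sacrifices a communication user for sensing gain.) -/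
/-!
The sensing term ranges over an interval of length `1 / 2`, half the value of a single user, while
two different user counts differ by at least `1`. So no sensing gain can make up for a lost user,
and this remains true for every sensing weight that keeps the interval shorter than `1`.
-/

theorem mem_range_intCastRingHom_of_eq_zero_or_one {R : Type*} [Ring R] {a : R}
    (ha : a = 0 ∨ a = 1) : a ∈ (Int.castRingHom R).range := by
  rcases ha with rfl | rfl
  exacts [zero_mem _, one_mem _]

section OrderedRing

variable {R : Type*} [Ring R] [LinearOrder R] [IsStrictOrderedRing R]

theorem int_le_of_cast_add_le_cast_add_of_sub_lt_one {m n : ℤ} {x y : R} (hxy : x - y < 1)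
    (h : (n : R) + y ≤ m + x) : n ≤ m := by
  have hlt : (n : R) < m + 1 :=
    calc (n : R) ≤ m + x - y := le_sub_iff_add_le.mpr h
      _ = m + (x - y) := add_sub_assoc _ _ _
      _ < m + 1 := add_lt_add_right hxy _
  exact Int.lt_add_one_iff.mp (by exact_mod_cast hlt)

theorem mul_sub_mul_lt_one_of_mul_lt_one {ρ T τ τ' : R} (hρ : 0 ≤ ρ) (hρT : ρ * T < 1)
    (hτ : τ ≤ T) (hτ' : 0 ≤ τ') : ρ * τ - ρ * τ' < 1 :=
  calc ρ * τ - ρ * τ' ≤ ρ * τ := sub_le_self _ (mul_nonneg hρ hτ')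
    _ ≤ ρ * T := mul_le_mul_of_nonneg_left hτ hρ
    _ < 1 := hρT

theorem hierarchy_no_sacrifice_general {ι : Type*} {s : Finset ι} {μ μ' : ι → R}
    (hμ : ∀ u ∈ s, μ u ∈ (Int.castRingHom R).range)
    (hμ' : ∀ u ∈ s, μ' u ∈ (Int.castRingHom R).range)
    {ρ T τ τ' : R} (hρ : 0 ≤ ρ) (hρT : ρ * T < 1) (hτ : τ ≤ T) (hτ' : 0 ≤ τ')
    (hge : ∑ u ∈ s, μ u + ρ * τ ≥ ∑ u ∈ s, μ' u + ρ * τ') :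
    ∑ u ∈ s, μ u ≥ ∑ u ∈ s, μ' u := by
  obtain ⟨m, hm⟩ := sum_mem hμ
  obtain ⟨n, hn⟩ := sum_mem hμ'
  rw [← hm, ← hn] at hge ⊢
  have hgain : ρ * τ - ρ * τ' < 1 := mul_sub_mul_lt_one_of_mul_lt_one hρ hρT hτ hτ'
  exact Int.cast_le.mpr (int_le_of_cast_add_le_cast_add_of_sub_lt_one hgain hge)

end OrderedRing

/-- With weights ρ_com = 1 and ρ_sen = σ_sen²/(2·α·N·P_tx), maximizing the
weighted ISAC objective never sacrifices a communication user for sensing gain: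
a larger (or equal) weighted objective implies at least as many admitted users. -/
theorem hierarchy_no_sacrifice
    (N U : ℕ) (hN : 0 < N) (hU : 0 < U)
    (α Ptx σsen2 : ℝ) (hα : 0 < α) (hP : 0 < Ptx) (hσ : 0 < σsen2)
    (ρsen : ℝ) (hρ : ρsen = σsen2 / (2 * α * N * Ptx))
    (μ μ' : Fin U → ℝ)
    (hμ : ∀ u, μ u = 0 ∨ μ u = 1) (hμ' : ∀ u, μ' u = 0 ∨ μ' u = 1)
    (τ τ' : ℝ)
    (hτ0 : 0 ≤ τ) (hτ1 : τ ≤ α * N * Ptx / σsen2)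
    (hτ'0 : 0 ≤ τ') (hτ'1 : τ' ≤ α * N * Ptx / σsen2)
    (hge : ∑ u, μ u + ρsen * τ ≥ ∑ u, μ' u + ρsen * τ') :
    ∑ u, μ u ≥ ∑ u, μ' u := by
  have hρT : ρsen * (α * N * Ptx / σsen2) = 1 / 2 := by
    rw [hρ]
    field_simp
  exact hierarchy_no_sacrifice_general
    (fun u _ => mem_range_intCastRingHom_of_eq_zero_or_one (hμ u))
    (fun u _ => mem_range_intCastRingHom_of_eq_zero_or_one (hμ' u))
    (hρ ▸ by positivity) (hρT.trans_lt one_half_lt_one) hτ1 hτ'0 hge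
end

section
/- (Proposition 5) Let L be a positive integer, let x, y ∈ ℝ^L be one-hot vectors (entries in {0,1}, each summing to 1), and let Y be an L×L real matrix with all entries in [0,1]. Then Y = x·y^T if and only if both of the following hold: (i) for every column i, Σ_{l=1}^L [Y]_{l,i} = [y]_i, and (ii) for every row l, Σ_{i=1}^L [Y]_{l,i} = [x]_l. That is, the bilinear constraint Y = x y^T is equivalent to the linear constraints that the column sums of Y equal the entries of y and the row sums of Y equal the entries of x. -/
/-!
A one-hot `x` is a standard basis vector `e_k`. Nonnegative rows that sum to `0` vanish, so the row
sums confine `Y` to its `k`-th row, and the column sums then identify that row with `y`.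
-/

theorem eq_single_of_nonneg_of_sum_eq {ι M : Type*} [Fintype ι] [DecidableEq ι] [AddCommMonoid M]
    [PartialOrder M] [IsOrderedCancelAddMonoid M] {x : ι → M} {k : ι}
    (hx : ∀ i, 0 ≤ x i) (hsum : ∑ i, x i = x k) : x = Pi.single k (x k) := by
  have hrest : ∑ i ∈ Finset.univ.erase k, x i = 0 := by
    rwa [← Finset.add_sum_erase _ x (Finset.mem_univ k), add_eq_left] at hsum
  have hzero := (Finset.sum_eq_zero_iff_of_nonneg fun i _ => hx i).mp hrest
  ext i
  obtain rfl | hik := eq_or_ne i k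
  · rw [Pi.single_eq_same]
  · rw [Pi.single_eq_of_ne hik, hzero i (Finset.mem_erase.mpr ⟨hik, Finset.mem_univ i⟩)]

theorem exists_eq_single_one_of_zero_or_one_of_sum_eq_one {ι R : Type*} [Fintype ι]
    [DecidableEq ι] [Semiring R] [PartialOrder R] [IsStrictOrderedRing R] {x : ι → R}
    (hx01 : ∀ i, x i = 0 ∨ x i = 1) (hx1 : ∑ i, x i = 1) : ∃ k, x = Pi.single k 1 := by
  obtain ⟨k, -, hk⟩ := Finset.exists_ne_zero_of_sum_ne_zero (hx1.trans_ne one_ne_zero)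
  have hxk : x k = 1 := (hx01 k).resolve_left hk
  have hx : ∀ i, 0 ≤ x i := fun i =>
    (hx01 i).elim (fun h => h.ge) (fun h => zero_le_one.trans h.ge)
  exact ⟨k, hxk ▸ eq_single_of_nonneg_of_sum_eq hx (hx1.trans hxk.symm)⟩

theorem eq_vecMulVec_single_one_of_row_sums_eq_zero {m n R : Type*} [DecidableEq m] [Fintype n]
    [NonAssocSemiring R] [PartialOrder R] [IsOrderedAddMonoid R] {Y : Matrix m n R} {k : m}
    (hY : ∀ l i, 0 ≤ Y l i) (hrow : ∀ l, l ≠ k → ∑ i, Y l i = 0) :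
    Y = Matrix.vecMulVec (Pi.single k 1) (Y k) := by
  ext l i
  rw [Matrix.vecMulVec_apply]
  obtain rfl | hlk := eq_or_ne l k
  · rw [Pi.single_eq_same, one_mul]
  · rw [Pi.single_eq_of_ne hlk, zero_mul]
    exact (Finset.sum_eq_zero_iff_of_nonneg fun i _ => hY l i).mp (hrow l hlk) i
      (Finset.mem_univ i)

theorem sum_row_vecMulVec {m n R : Type*} [Fintype n] [NonUnitalNonAssocSemiring R]
    (x : m → R) (y : n → R) (l : m) : ∑ i, Matrix.vecMulVec x y l i = x l * ∑ i, y i := by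
  simp only [Matrix.vecMulVec_apply, Finset.mul_sum]

theorem sum_col_vecMulVec {m n R : Type*} [Fintype m] [NonUnitalNonAssocSemiring R]
    (x : m → R) (y : n → R) (i : n) : ∑ l, Matrix.vecMulVec x y l i = (∑ l, x l) * y i := by
  simp only [Matrix.vecMulVec_apply, Finset.sum_mul]

theorem bilinear_to_linear_equivalence_general {m n R : Type*} [Fintype m] [Fintype n]
    [Semiring R] [PartialOrder R] [IsStrictOrderedRing R] {x : m → R} {y : n → R}
    (hx01 : ∀ l, x l = 0 ∨ x l = 1) (hx1 : ∑ l, x l = 1) (hy1 : ∑ i, y i = 1)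
    {Y : Matrix m n R} (hY : ∀ l i, 0 ≤ Y l i) :
    Y = Matrix.vecMulVec x y ↔ (∀ i, ∑ l, Y l i = y i) ∧ (∀ l, ∑ i, Y l i = x l) := by
  classical
  constructor
  · rintro rfl
    exact ⟨fun i => by rw [sum_col_vecMulVec, hx1, one_mul],
      fun l => by rw [sum_row_vecMulVec, hy1, mul_one]⟩
  · rintro ⟨hcol, hrow⟩
    obtain ⟨k, rfl⟩ := exists_eq_single_one_of_zero_or_one_of_sum_eq_one hx01 hx1
    have hYk : Y = Matrix.vecMulVec (Pi.single k 1) (Y k) :=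
      eq_vecMulVec_single_one_of_row_sums_eq_zero hY fun l hl =>
        (hrow l).trans (Pi.single_eq_of_ne hl 1)
    have hy : y = Y k := by
      ext i
      calc
        y i = ∑ l, Y l i := (hcol i).symm
        _ = ∑ l, Matrix.vecMulVec (Pi.single k 1) (Y k) l i := by rw [← hYk]
        _ = Y k i := by rw [sum_col_vecMulVec, hx1, one_mul]
    rwa [hy]

/-- Proposition 5: for one-hot vectors x, y ∈ ℝ^L and a matrix Y with entries
in [0,1], the bilinear constraint Y = x y^T is equivalent to the linear
constraints that the column sums of Y equal the entries of y and the row sums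
of Y equal the entries of x. -/
theorem bilinear_to_linear_equivalence
    (L : ℕ) (hL : 0 < L) (x y : Fin L → ℝ)
    (hx01 : ∀ l, x l = 0 ∨ x l = 1) (hx1 : ∑ l, x l = 1)
    (hy01 : ∀ i, y i = 0 ∨ y i = 1) (hy1 : ∑ i, y i = 1)
    (Y : Matrix (Fin L) (Fin L) ℝ)
    (hY : ∀ l i : Fin L, Y l i ∈ Set.Icc (0 : ℝ) 1) :
    Y = Matrix.vecMulVec x y ↔
      ((∀ i : Fin L, ∑ l : Fin L, Y l i = y i) ∧
       (∀ l : Fin L, ∑ i : Fin L, Y l i = x l)) := by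
  exact bilinear_to_linear_equivalence_general hx01 hx1 hy1 fun l i => (hY l i).1
end
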